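/- arXiv:2511.04775 — 7 statements merged into one kernel-verified Lean document; each statement's English description precedes it below -/
import Mathlib

section
/- Let G = (V,E) be a finite simple graph on n vertices and let d be an integer with 1 ≤ d ≤ n. Then V can be partitioned into pairwise disjoint sets R, H_1, …, H_h (for some h ≥ 0) such that: (i) |H_i| > d for every i ∈ {1,…,h}; (ii) for every i and every pair of vertices u, v ∈ H_i there is a walk from u to v in G of length at most 4 (so each H_i has weak diameter at most 4 in G); and (iii) every vertex u ∈ R satisfies deg_G(u) < d. -/
/-- **Decomposition lemma.** Let `G` be a finite simple graph on `n` vertices and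
`1 ≤ d ≤ n`. Then the vertex set can be partitioned into pairwise disjoint sets
`R, H 1, …, H h` such that each `H i` has more than `d` vertices, any two vertices of
`H i` are joined by a walk in `G` of length at most `4` (weak diameter at most `4`),
and every vertex of `R` has degree less than `d` in `G`. -/
theorem cluster_decomposition {V : Type*} [Fintype V] [DecidableEq V]
    (G : SimpleGraph V) [DecidableRel G.Adj] (d : ℕ)
    (hd1 : 1 ≤ d) (hdn : d ≤ Fintype.card V) :
    ∃ (h : ℕ) (H : Fin h → Finset V) (R : Finset V),
      (∀ i j : Fin h, i ≠ j → Disjoint (H i) (H j)) ∧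
      (∀ i : Fin h, Disjoint R (H i)) ∧
      (R ∪ Finset.univ.biUnion H = Finset.univ) ∧
      (∀ i : Fin h, d < (H i).card) ∧
      (∀ i : Fin h, ∀ u ∈ H i, ∀ v ∈ H i, ∃ w : G.Walk u v, w.length ≤ 4) ∧
      (∀ u ∈ R, G.degree u < d) := by
  classical
  let N : V → Finset V := fun c => insert c (G.neighborFinset c)
  have hNself : ∀ c, c ∈ N c := fun c => Finset.mem_insert_self _ _
  have hN1 : ∀ c, ∀ v ∈ N c, ∃ w : G.Walk v c, w.length ≤ 1 := by
    intro c v hv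
    rcases Finset.mem_insert.1 hv with rfl | hv
    · exact ⟨SimpleGraph.Walk.nil, by simp⟩
    · have hadj : G.Adj v c := ((G.mem_neighborFinset c v).1 hv).symm
      exact ⟨SimpleGraph.Walk.cons hadj SimpleGraph.Walk.nil, by simp⟩
  have hNcard : ∀ c, (N c).card = G.degree c + 1 := by
    intro c
    rw [Finset.card_insert_of_notMem (by simp), G.card_neighborFinset_eq_degree]
  let P : Finset V → Prop := fun C =>
    (∀ c ∈ C, d ≤ G.degree c) ∧ (∀ a ∈ C, ∀ b ∈ C, a ≠ b → Disjoint (N a) (N b))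
  obtain ⟨C, hC⟩ : ∃ C, Maximal P C :=
    (Set.toFinite {C | P C}).exists_maximal ⟨∅, by simp [P]⟩
  have hmax : ∀ v, d ≤ G.degree v → ∃ c ∈ C, ¬ Disjoint (N v) (N c) := by
    intro v hv
    by_contra! hcon
    have hP : P (insert v C) := by
      refine ⟨?_, ?_⟩
      · intro c hc
        rcases Finset.mem_insert.1 hc with rfl | hc
        · exact hv
        · exact hC.prop.1 c hc
      · intro a ha b hb hab
        rcases Finset.mem_insert.1 ha with rfl | ha2 <;> rcases Finset.mem_insert.1 hb with rfl | hb2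
        · exact absurd rfl hab
        · exact hcon b hb2
        · exact (hcon a ha2).symm
        · exact hC.prop.2 a ha2 b hb2 hab
    have hvC : v ∈ C := hC.2 hP (Finset.subset_insert _ _) (Finset.mem_insert_self _ _)
    exact Finset.disjoint_left.1 (hcon v hvC) (hNself v) (hNself v)
  have hg : ∀ v, ∃ c, ((∃ c' ∈ C, v ∈ N c') ∨ d ≤ G.degree v) →
      c ∈ C ∧ (∃ w : G.Walk v c, w.length ≤ 2) ∧ ∀ c' ∈ C, v ∈ N c' → c = c' := by
    intro v
    by_cases h1 : ∃ c' ∈ C, v ∈ N c'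
    · obtain ⟨c, hc, hvc⟩ := h1
      refine ⟨c, fun _ => ⟨hc, ?_, ?_⟩⟩
      · obtain ⟨w, hw⟩ := hN1 c v hvc
        exact ⟨w, by omega⟩
      · intro c' hc' hv'
        by_contra hne
        exact Finset.disjoint_left.1 (hC.prop.2 c hc c' hc' hne) hvc hv'
    · by_cases h2 : d ≤ G.degree v
      · obtain ⟨c, hc, hnd⟩ := hmax v h2
        obtain ⟨x, hxv, hxc⟩ := Finset.not_disjoint_iff.1 hnd
        obtain ⟨w1, hw1⟩ := hN1 v x hxv
        obtain ⟨w2, hw2⟩ := hN1 c x hxc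
        refine ⟨c, fun _ => ⟨hc, ⟨w1.reverse.append w2, ?_⟩, ?_⟩⟩
        · simp only [SimpleGraph.Walk.length_append, SimpleGraph.Walk.length_reverse]
          omega
        · intro c' hc' hv'
          exact absurd ⟨c', hc', hv'⟩ h1
      · exact ⟨v, fun h => (h.elim h1 h2).elim⟩
  choose g hg using hg
  let T : Finset V := Finset.univ.filter (fun v => (∃ c' ∈ C, v ∈ N c') ∨ d ≤ G.degree v)
  have hT : ∀ v, v ∈ T ↔ ((∃ c' ∈ C, v ∈ N c') ∨ d ≤ G.degree v) := by simp [T]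
  let e := C.equivFin.symm
  let H : Fin C.card → Finset V := fun i => T.filter (fun v => g v = (e i : V))
  have hH : ∀ i v, v ∈ H i ↔ v ∈ T ∧ g v = (e i : V) := by
    intro i v
    exact Finset.mem_filter
  refine ⟨C.card, H, Tᶜ, ?_, ?_, ?_, ?_, ?_, ?_⟩
  · intro i j hij
    rw [Finset.disjoint_left]
    intro v hi hj
    exact hij (e.injective (Subtype.ext (((hH i v).1 hi).2.symm.trans ((hH j v).1 hj).2)))
  · intro i
    rw [Finset.disjoint_left]
    intro v hv hi
    exact Finset.mem_compl.1 hv ((hH i v).1 hi).1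
  · ext v
    simp only [Finset.mem_union, Finset.mem_biUnion, Finset.mem_univ, true_and, iff_true,
      Finset.mem_compl]
    by_cases hv : v ∈ T
    · right
      have := (hg v ((hT v).1 hv)).1
      refine ⟨e.symm ⟨g v, this⟩, (hH _ v).2 ⟨hv, by simp⟩⟩
    · exact Or.inl hv
  · intro i
    have hsub : N (e i : V) ⊆ H i := by
      intro v hv
      have h0 : (∃ c' ∈ C, v ∈ N c') ∨ d ≤ G.degree v := Or.inl ⟨_, (e i).2, hv⟩
      exact (hH i v).2 ⟨(hT v).2 h0, (hg v h0).2.2 _ (e i).2 hv⟩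
    have h1 := Finset.card_le_card hsub
    rw [hNcard] at h1
    have h2 := hC.prop.1 _ (e i).2
    omega
  · intro i u hu v hv
    obtain ⟨huT, hu2⟩ := (hH i u).1 hu
    obtain ⟨hvT, hv2⟩ := (hH i v).1 hv
    obtain ⟨w1, hw1⟩ := (hg u ((hT u).1 huT)).2.1
    obtain ⟨w2, hw2⟩ := (hg v ((hT v).1 hvT)).2.1
    have huv : g v = g u := hv2.trans hu2.symm
    refine ⟨w1.append (w2.reverse.copy huv rfl), ?_⟩
    simp only [SimpleGraph.Walk.length_append, SimpleGraph.Walk.length_copy,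
      SimpleGraph.Walk.length_reverse]
    omega
  · intro u hu
    by_contra hcon
    exact Finset.mem_compl.1 hu ((hT u).2 (Or.inr (not_lt.1 hcon)))
end

section
/- Let G be a finite simple graph on n ≥ 2 vertices and let d be an integer with 1 ≤ d ≤ n. Then there exists a set S of vertices with |S| ≤ ⌈(n/d)·(ln n + 1)⌉ such that every vertex u with deg_G(u) ≥ d is adjacent in G to some vertex of S. -/
theorem hitting_set_aux {V : Type*} [Fintype V] [DecidableEq V]
    (G : SimpleGraph V) [DecidableRel G.Adj] (n d : ℕ)
    (hn : Fintype.card V = n) (hn2 : 2 ≤ n) (hdn : d ≤ n) (k : ℕ) :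
    ∃ S : Finset V, S.card ≤ k ∧
      ((Finset.univ.filter (fun u : V => d ≤ G.degree u ∧ ∀ s ∈ S, ¬ G.Adj u s)).card : ℝ)
        ≤ n * (1 - (d : ℝ) / n) ^ k := by
  have hn0 : (0 : ℝ) < n := by
    have : 0 < n := by omega
    exact_mod_cast this
  induction k with
  | zero =>
    refine ⟨∅, by simp, ?_⟩
    simp only [pow_zero, mul_one]
    rw [← hn]
    exact_mod_cast Finset.card_le_univ _
  | succ k ih =>
    obtain ⟨S, hS, hU⟩ := ih
    set U := Finset.univ.filter (fun u : V => d ≤ G.degree u ∧ ∀ s ∈ S, ¬ G.Adj u s) with hUdef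
    have hsum : ∑ v : V, (U.filter (fun u => G.Adj u v)).card = ∑ u ∈ U, G.degree u := by
      have := Finset.sum_card_bipartiteAbove_eq_sum_card_bipartiteBelow
        (s := U) (t := (Finset.univ : Finset V)) (fun u v => G.Adj u v)
      simp only [Finset.bipartiteAbove, Finset.bipartiteBelow] at this
      rw [← this]
      refine Finset.sum_congr rfl fun u _ => ?_
      rw [← G.card_neighborFinset_eq_degree, G.neighborFinset_eq_filter]
    have hge : U.card * d ≤ ∑ u ∈ U, G.degree u := by
      rw [← smul_eq_mul]
      exact Finset.card_nsmul_le_sum _ _ _ fun u hu => (Finset.mem_filter.1 hu).2.1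
    obtain ⟨v, hv⟩ : ∃ v : V, U.card * d ≤ n * (U.filter (fun u => G.Adj u v)).card := by
      by_contra! h
      have hne : (Finset.univ : Finset V).Nonempty := by
        rw [← Finset.card_pos, Finset.card_univ]; omega
      have h1 := Finset.sum_lt_sum_of_nonempty hne (fun v _ => h v)
      rw [← Finset.mul_sum, hsum, Finset.sum_const, Finset.card_univ, hn, smul_eq_mul] at h1
      have := Nat.mul_le_mul_left n hge
      omega
    refine ⟨insert v S, (Finset.card_insert_le _ _).trans (by omega), ?_⟩
    have heq : Finset.univ.filter (fun u : V => d ≤ G.degree u ∧ ∀ s ∈ insert v S, ¬ G.Adj u s)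
        = U.filter (fun u => ¬ G.Adj u v) := by
      ext u
      simp [hUdef]
      tauto
    rw [heq]
    have hc := Finset.card_filter_add_card_filter_not (s := U) (fun u => G.Adj u v)
    have hc' : ((U.filter (fun u => G.Adj u v)).card : ℝ)
      + (U.filter (fun u => ¬ G.Adj u v)).card = U.card := by exact_mod_cast hc
    have hv' : (U.card : ℝ) * d ≤ n * (U.filter (fun u => G.Adj u v)).card := by exact_mod_cast hv
    have hp : 0 ≤ 1 - (d : ℝ) / n := by
      rw [sub_nonneg, div_le_one hn0]; exact_mod_cast hdn
    calc ((U.filter (fun u => ¬ G.Adj u v)).card : ℝ) ≤ U.card * (1 - (d : ℝ) / n) := by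
          have : (U.card : ℝ) * d / n ≤ (U.filter (fun u => G.Adj u v)).card := by
            rw [div_le_iff₀ hn0]; linarith
          rw [mul_sub, mul_one, ← mul_div_assoc]; linarith
      _ ≤ (n * (1 - (d : ℝ) / n) ^ k) * (1 - (d : ℝ) / n) := mul_le_mul_of_nonneg_right hU hp
      _ = _ := by ring

/-- **Hitting set.** In a finite simple graph on `n ≥ 2` vertices, for any `1 ≤ d ≤ n`
there is a set `S` of at most `⌈(n/d)·(ln n + 1)⌉` vertices such that every vertex of
degree at least `d` is adjacent to some vertex of `S`. -/
theorem hitting_set {V : Type*} [Fintype V] [DecidableEq V]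
    (G : SimpleGraph V) [DecidableRel G.Adj] (n d : ℕ)
    (hn : Fintype.card V = n) (hn2 : 2 ≤ n) (hd1 : 1 ≤ d) (hdn : d ≤ n) :
    ∃ S : Finset V,
      S.card ≤ ⌈((n : ℝ) / (d : ℝ)) * (Real.log n + 1)⌉₊ ∧
      ∀ u : V, d ≤ G.degree u → ∃ s ∈ S, G.Adj u s := by
  obtain ⟨S, hS, hU⟩ := hitting_set_aux G n d hn hn2 hdn
    ⌈((n : ℝ) / (d : ℝ)) * (Real.log n + 1)⌉₊
  refine ⟨S, hS, ?_⟩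
  have hk := Nat.le_ceil (((n : ℝ) / (d : ℝ)) * (Real.log n + 1))
  generalize ⌈((n : ℝ) / (d : ℝ)) * (Real.log n + 1)⌉₊ = k at hk hU
  have hn0 : (0 : ℝ) < n := by
    have : 0 < n := by omega
    exact_mod_cast this
  have hd0 : (0 : ℝ) < d := by exact_mod_cast hd1
  have hp : 0 ≤ 1 - (d : ℝ) / n := by
    rw [sub_nonneg, div_le_one hn0]; exact_mod_cast hdn
  have h1 : (1 - (d : ℝ) / n) ^ k ≤ Real.exp (-(k * (d / n))) := by
    calc (1 - (d : ℝ) / n) ^ k ≤ (Real.exp (-(d / n))) ^ k :=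
          pow_le_pow_left₀ hp (Real.one_sub_le_exp_neg _) k
      _ = _ := by rw [← Real.exp_nat_mul]; congr 1; ring
  have h2 : Real.log n + 1 ≤ k * (d / n) := by
    have := mul_le_mul_of_nonneg_right hk (div_pos hd0 hn0).le
    calc Real.log n + 1 = (n : ℝ) / d * (Real.log n + 1) * (d / n) := by field_simp
      _ ≤ _ := this
  have h3 : (n : ℝ) * (1 - (d : ℝ) / n) ^ k < 1 := by
    calc (n : ℝ) * (1 - (d : ℝ) / n) ^ k ≤ Real.exp (Real.log n) * Real.exp (-(k * (d / n))) := by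
          rw [Real.exp_log hn0]; exact mul_le_mul_of_nonneg_left h1 hn0.le
      _ = Real.exp (Real.log n - k * (d / n)) := by rw [← Real.exp_add]; congr 1
      _ < 1 := by rw [Real.exp_lt_one_iff]; linarith
  intro u hu
  by_contra! h
  have hpos : 0 < (Finset.univ.filter
      (fun u : V => d ≤ G.degree u ∧ ∀ s ∈ S, ¬ G.Adj u s)).card :=
    Finset.card_pos.2 ⟨u, by simpa using ⟨hu, h⟩⟩
  have : (1 : ℝ) ≤ (Finset.univ.filter
      (fun u : V => d ≤ G.degree u ∧ ∀ s ∈ S, ¬ G.Adj u s)).card := by exact_mod_cast hpos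
  linarith
end

section
/- Let n₁, n₂, n₃ ≥ 1 and L ≥ 0 be integers, and let A : [n₁] × [n₂] → ℤ and B : [n₂] × [n₃] → ℤ be matrices with |B[k,j] − B[k,j']| ≤ L for all k ∈ [n₂] and all j, j' ∈ [n₃]. Define Δ_k = min_{j ∈ [n₃]} B[k,j], A'[i,k] = A[i,k] + Δ_k, m_i = min_{k ∈ [n₂]} A'[i,k], and K_i = {k ∈ [n₂] : A'[i,k] ≤ m_i + L}. Then: (i) K_i is nonempty; (ii) for every k ∈ K_i and every j ∈ [n₃], both A'[i,k] − m_i and B[k,j] − Δ_k lie in {0, 1, …, L}; and (iii) for all i ∈ [n₁], j ∈ [n₃]: min_{k ∈ [n₂]} (A[i,k] + B[k,j]) = m_i + min_{k ∈ K_i} ((A'[i,k] − m_i) + (B[k,j] − Δ_k)). -/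
/-- Reduction of a `(min,+)`-product with row-bounded-difference right factor to a
product of matrices with entries in `{0, …, L}`:  with `Δ k = min_j B[k,j]`,
`A'[i,k] = A[i,k] + Δ k`, `m i = min_k A'[i,k]` and `K_i = {k : A'[i,k] ≤ m i + L}`,
the set `K_i` is nonempty, the shifted entries lie in `{0, …, L}`, and
`min_k (A[i,k] + B[k,j]) = m i + min_{k ∈ K_i} ((A'[i,k] − m i) + (B[k,j] − Δ k))`. -/
theorem minplus_shift (n₁ n₂ n₃ : ℕ) (h₁ : 1 ≤ n₁) (h₂ : 1 ≤ n₂) (h₃ : 1 ≤ n₃)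
    (L : ℤ) (hL : 0 ≤ L)
    (A : Fin n₁ → Fin n₂ → ℤ) (B : Fin n₂ → Fin n₃ → ℤ)
    (hB : ∀ (k : Fin n₂) (j j' : Fin n₃), |B k j - B k j'| ≤ L)
    (Δ : Fin n₂ → ℤ) (hΔ : ∀ k, IsLeast (Set.range (B k)) (Δ k))
    (A' : Fin n₁ → Fin n₂ → ℤ) (hA' : ∀ i k, A' i k = A i k + Δ k)
    (m : Fin n₁ → ℤ) (hm : ∀ i, IsLeast (Set.range (A' i)) (m i))
    (C : Fin n₁ → Fin n₃ → ℤ)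
    (hC : ∀ i j, IsLeast (Set.range fun k => A i k + B k j) (C i j)) :
    ∀ i : Fin n₁,
      (∃ k, A' i k ≤ m i + L) ∧
      (∀ k, A' i k ≤ m i + L →
        (0 ≤ A' i k - m i ∧ A' i k - m i ≤ L) ∧
        ∀ j, 0 ≤ B k j - Δ k ∧ B k j - Δ k ≤ L) ∧
      (∀ j : Fin n₃,
        IsLeast {x : ℤ | ∃ k, A' i k ≤ m i + L ∧
          (A' i k - m i) + (B k j - Δ k) = x} (C i j - m i)) := by
  have hb : ∀ k j, 0 ≤ B k j - Δ k ∧ B k j - Δ k ≤ L := by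
    intro k j
    have h1 := (hΔ k).2 (Set.mem_range_self j)
    obtain ⟨j', hj'⟩ := (hΔ k).1
    have h2 := (abs_le.mp (hB k j j')).2
    constructor <;> linarith
  intro i
  obtain ⟨k0, hk0⟩ := (hm i).1
  have hlow : ∀ k, m i ≤ A' i k := fun k => (hm i).2 (Set.mem_range_self k)
  refine ⟨⟨k0, by linarith⟩, fun k hk => ⟨⟨by linarith [hlow k], by linarith⟩, hb k⟩, ?_⟩
  intro j
  have hc : ∀ k, C i j ≤ A i k + B k j := fun k => (hC i j).2 ⟨k, rfl⟩
  obtain ⟨k, hk⟩ := (hC i j).1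
  have hk' : A i k + B k j = C i j := hk
  refine ⟨⟨k, ?_, ?_⟩, ?_⟩
  · linarith [hc k0, (hb k j).1, (hb k0 j).2, hA' i k, hA' i k0]
  · linarith [hA' i k]
  · rintro x ⟨k1, _, rfl⟩
    linarith [hc k1, hA' i k1]
end

section
/- Fix integers h, d, s ≥ 1 and L ≥ 1. The indices i ∈ [hd] are partitioned into h contiguous groups of size d, where î = ⌈i/d⌉ denotes the group containing i. Let A : [hd] × [s] → ℤ satisfy |A[i,k] − A[i',k]| ≤ L for all k ∈ [s] and all i, i' with î = î', and let B : [s] × [hd] → ℤ satisfy |B[k,j] − B[k,j']| ≤ L for all k ∈ [s] and all j, j' with ĵ = ĵ'. Define A'[g,k] = ⌊(min_{i : î = g} A[i,k]) / L⌋ and B'[k,g] = ⌊(min_{j : ĵ = g} B[k,j]) / L⌋ (integer floor division), C[i,j] = min_{k ∈ [s]} (A[i,k] + B[k,j]) and C'[g,g'] = min_{k ∈ [s]} (A'[g,k] + B'[k,g']). Then 0 ≤ C[i,j] − L·C'[î,ĵ] < 4L for all i, j ∈ [hd]. -/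
/-- With indices partitioned into `h` groups of size `d` (an index in group `g` is
written as a pair `(g, i) : Fin h × Fin d`), for group-bounded-difference matrices
`A`, `B`, rounded group representatives `A'[g,k] = ⌊(min_i A[(g,i),k])/L⌋`,
`B'[k,g] = ⌊(min_j B[k,(g,j)])/L⌋`, and `(min,+)`-products
`C[(g,i),(g',j)] = min_k (A[(g,i),k] + B[k,(g',j)])`,
`C'[g,g'] = min_k (A'[g,k] + B'[k,g'])`, we have `0 ≤ C − L·C' < 4L` entrywise. -/
theorem group_rounding_minplus_approx (h d s : ℕ) (hh : 1 ≤ h) (hd : 1 ≤ d) (hs : 1 ≤ s)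
    (L : ℤ) (hL : 1 ≤ L)
    (A : Fin h → Fin d → Fin s → ℤ) (B : Fin s → Fin h → Fin d → ℤ)
    (hA : ∀ (g : Fin h) (i i' : Fin d) (k : Fin s), |A g i k - A g i' k| ≤ L)
    (hB : ∀ (k : Fin s) (g : Fin h) (j j' : Fin d), |B k g j - B k g j'| ≤ L)
    (MA : Fin h → Fin s → ℤ)
    (hMA : ∀ g k, IsLeast (Set.range fun i => A g i k) (MA g k))
    (MB : Fin s → Fin h → ℤ)
    (hMB : ∀ k g, IsLeast (Set.range fun j => B k g j) (MB k g))
    (A' : Fin h → Fin s → ℤ) (hA' : ∀ g k, A' g k = Int.fdiv (MA g k) L)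
    (B' : Fin s → Fin h → ℤ) (hB' : ∀ k g, B' k g = Int.fdiv (MB k g) L)
    (C : Fin h → Fin d → Fin h → Fin d → ℤ)
    (hC : ∀ g i g' j,
      IsLeast (Set.range fun k => A g i k + B k g' j) (C g i g' j))
    (C' : Fin h → Fin h → ℤ)
    (hC' : ∀ g g', IsLeast (Set.range fun k => A' g k + B' k g') (C' g g')) :
    ∀ g i g' j, 0 ≤ C g i g' j - L * C' g g' ∧
      C g i g' j - L * C' g g' < 4 * L := by
  have key : ∀ m : ℤ, L * Int.fdiv m L ≤ m ∧ m < L * Int.fdiv m L + L := by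
    intro m
    rw [Int.fdiv_eq_ediv_of_nonneg m (by omega)]
    have h1 := Int.emod_nonneg m (show L ≠ 0 by omega)
    have h2 := Int.emod_lt_of_pos m (show 0 < L by omega)
    have h3 := Int.mul_ediv_add_emod m L
    constructor <;> linarith
  have ka : ∀ g i k, L * A' g k ≤ A g i k ∧ A g i k < L * A' g k + 2 * L := by
    intro g i k
    obtain ⟨⟨i', hi'⟩, hl⟩ := hMA g k
    have h1 : MA g k ≤ A g i k := hl ⟨i, rfl⟩
    have h2 := (abs_le.mp (hA g i i' k)).2
    have h3 := key (MA g k)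
    simp only at hi'
    rw [hA']
    constructor <;> linarith [h3.1, h3.2]
  have kb : ∀ k g j, L * B' k g ≤ B k g j ∧ B k g j < L * B' k g + 2 * L := by
    intro k g j
    obtain ⟨⟨j', hj'⟩, hl⟩ := hMB k g
    have h1 : MB k g ≤ B k g j := hl ⟨j, rfl⟩
    have h2 := (abs_le.mp (hB k g j j')).2
    have h3 := key (MB k g)
    simp only at hj'
    rw [hB']
    constructor <;> linarith [h3.1, h3.2]
  intro g i g' j
  obtain ⟨⟨k, hk⟩, hl⟩ := hC g i g' j
  obtain ⟨⟨k', hk'⟩, hl'⟩ := hC' g g'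
  have h1 : C g i g' j ≤ A g i k' + B k' g' j := hl ⟨k', rfl⟩
  have h2 : C' g g' ≤ A' g k + B' k g' := hl' ⟨k, rfl⟩
  simp only at hk hk'
  have h3 : L * C' g g' ≤ L * (A' g k + B' k g') :=
    mul_le_mul_of_nonneg_left h2 (by omega)
  rw [mul_add] at h3
  have h4 : L * C' g g' = L * A' g k' + L * B' k' g' := by rw [← hk', mul_add]
  have a1 := ka g i k
  have a2 := ka g i k'
  have b1 := kb k g' j
  have b2 := kb k' g' j
  constructor
  · linarith [a1.1, b1.1]
  · linarith [a2.2, b2.2]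
end

section
/- Fix integers h, d, s ≥ 1 and L ≥ 1. The indices i ∈ [hd] are partitioned into h contiguous groups of size d, where î = ⌈i/d⌉ denotes the group containing i. Let A : [hd] × [s] → ℤ satisfy |A[i,k] − A[i',k]| ≤ L for all k ∈ [s] and all i, i' with î = î', and let B : [s] × [hd] → ℤ satisfy |B[k,j] − B[k,j']| ≤ L for all k ∈ [s] and all j, j' with ĵ = ĵ'. Define A'[g,k] = ⌊(min_{i : î = g} A[i,k]) / L⌋ and B'[k,g] = ⌊(min_{j : ĵ = g} B[k,j]) / L⌋ (integer floor division), C[i,j] = min_{k ∈ [s]} (A[i,k] + B[k,j]) and C'[g,g'] = min_{k ∈ [s]} (A'[g,k] + B'[k,g']). If an index k ∈ [s] is a witness for C[i,j], i.e. A[i,k] + B[k,j] = C[i,j], then |A'[î,k] + B'[k,ĵ] − C'[î,ĵ]| ≤ 3. -/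
/-- In the setting of the group-rounding approximation of a `(min,+)`-product, every
witness `k` of `C[(g,i),(g',j)]` (i.e. `A[(g,i),k] + B[k,(g',j)] = C[(g,i),(g',j)]`)
satisfies `|A'[g,k] + B'[k,g'] − C'[g,g']| ≤ 3`. -/
theorem group_rounding_witness (h d s : ℕ) (hh : 1 ≤ h) (hd : 1 ≤ d) (hs : 1 ≤ s)
    (L : ℤ) (hL : 1 ≤ L)
    (A : Fin h → Fin d → Fin s → ℤ) (B : Fin s → Fin h → Fin d → ℤ)
    (hA : ∀ (g : Fin h) (i i' : Fin d) (k : Fin s), |A g i k - A g i' k| ≤ L)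
    (hB : ∀ (k : Fin s) (g : Fin h) (j j' : Fin d), |B k g j - B k g j'| ≤ L)
    (MA : Fin h → Fin s → ℤ)
    (hMA : ∀ g k, IsLeast (Set.range fun i => A g i k) (MA g k))
    (MB : Fin s → Fin h → ℤ)
    (hMB : ∀ k g, IsLeast (Set.range fun j => B k g j) (MB k g))
    (A' : Fin h → Fin s → ℤ) (hA' : ∀ g k, A' g k = Int.fdiv (MA g k) L)
    (B' : Fin s → Fin h → ℤ) (hB' : ∀ k g, B' k g = Int.fdiv (MB k g) L)
    (C : Fin h → Fin d → Fin h → Fin d → ℤ)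
    (hC : ∀ g i g' j,
      IsLeast (Set.range fun k => A g i k + B k g' j) (C g i g' j))
    (C' : Fin h → Fin h → ℤ)
    (hC' : ∀ g g', IsLeast (Set.range fun k => A' g k + B' k g') (C' g g')) :
    ∀ (g : Fin h) (i : Fin d) (g' : Fin h) (j : Fin d) (k : Fin s),
      A g i k + B k g' j = C g i g' j →
      |A' g k + B' k g' - C' g g'| ≤ 3 := by
  intro g i g' j k hk
  obtain ⟨k', hk'⟩ := (hC' g g').1
  have h1 : C' g g' ≤ A' g k + B' k g' := (hC' g g').2 ⟨k, rfl⟩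
  have h2 : C g i g' j ≤ A g i k' + B k' g' j := (hC g i g' j).2 ⟨k', rfl⟩
  have h3 : MA g k ≤ A g i k := (hMA g k).2 ⟨i, rfl⟩
  have h4 : MB k g' ≤ B k g' j := (hMB k g').2 ⟨j, rfl⟩
  obtain ⟨i', hi'⟩ := (hMA g k').1
  obtain ⟨j', hj'⟩ := (hMB k' g').1
  have h5 := (abs_le.1 (hA g i i' k')).2
  have h6 := (abs_le.1 (hB k' g' j j')).2
  have hL0 : 0 < L := by omega
  have key : ∀ x : ℤ, L * Int.fdiv x L ≤ x ∧ x < L * Int.fdiv x L + L := by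
    intro x
    rw [Int.fdiv_eq_ediv_of_nonneg _ hL0.le]
    have e1 := Int.emod_add_mul_ediv x L
    have e2 := Int.emod_nonneg x hL0.ne'
    have e3 := Int.emod_lt_of_pos x hL0
    constructor <;> linarith
  have a1 := (key (MA g k)).1
  have a2 := (key (MB k g')).1
  have a3 := (key (MA g k')).2
  have a4 := (key (MB k' g')).2
  rw [← hA'] at a1 a3
  rw [← hB'] at a2 a4
  simp only at hk' hi' hj'
  have h7 : L * (A' g k + B' k g' - C' g g') < L * 4 := by
    rw [← hk']
    linarith
  have h8 := lt_of_mul_lt_mul_left h7 hL0.le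
  rw [abs_le]
  constructor <;> omega
end

section
/- Let G be a finite simple graph, let D ≥ 1 be an integer, and let R be a set of vertices such that deg_G(x) < D for every x ∈ R. Let P be a walk from v to r such that M := max_{x ∈ support(P)} deg_G(x) ≥ D, and suppose some vertex in the support of P does not lie in R. Let h be the last vertex along P that does not lie in R, and let ℓ be the number of edges of P strictly after the last occurrence of h. Then the prefix of P from v to h is a walk of length |P| − ℓ whose maximum vertex degree equals M. In particular, if M ∈ [D, 2D] then d_D(v,h) ≤ |P| − ℓ. -/
/-- The maximum degree of a vertex on (the support of) a walk. -/
def walkMaxDeg {V : Type*} [Fintype V] (G : SimpleGraph V) [DecidableRel G.Adj]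
    {u v : V} (p : G.Walk u v) : ℕ :=
  (p.support.map fun x => G.degree x).foldr max 0

/-- `dD G D u v` is the minimum length of a (not necessarily simple) walk from `u`
to `v` whose maximum vertex degree lies in `[D, 2D]`. -/
noncomputable def dD {V : Type*} [Fintype V] (G : SimpleGraph V)
    [DecidableRel G.Adj] (D : ℕ) (u v : V) : ℕ :=
  sInf {n : ℕ | ∃ p : G.Walk u v,
    D ≤ walkMaxDeg G p ∧ walkMaxDeg G p ≤ 2 * D ∧ p.length = n}

theorem foldr_max_append_aux (D : ℕ) (l₁ l₂ : List ℕ) (h₂ : ∀ x ∈ l₂, x < D)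
    (hM : D ≤ (l₁ ++ l₂).foldr max 0) : l₁.foldr max 0 = (l₁ ++ l₂).foldr max 0 := by
  have h0 : l₂ = [] ∨ l₂.foldr max 0 < D := by
    clear hM
    induction l₂ with
    | nil => exact Or.inl rfl
    | cons a t ih =>
      right
      have ha : a < D := h₂ a (by simp)
      rcases ih (fun x hx => h₂ x (by simp [hx])) with rfl | h
      · simpa using ha
      · simpa using ⟨ha, h⟩
  have key : ∀ l : List ℕ, (l ++ l₂).foldr max 0 = max (l.foldr max 0) (l₂.foldr max 0) := by
    intro l
    induction l with
    | nil => simp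
    | cons a t ih => rw [List.cons_append, List.foldr_cons, ih, List.foldr_cons, max_assoc]
  rcases h0 with rfl | h0
  · simp
  · rw [key] at hM ⊢
    omega

/-- Let `deg x < D` for all `x ∈ R`, and let `P` be a walk from `v` to `r` with
maximum support degree `M ≥ D` such that some support vertex is outside `R`.  Split
`P = P₁ ++ P₂` at the last occurrence of the last vertex `h ∉ R` (so all vertices of
`P` strictly after it lie in `R`).  Then the prefix `P₁` has length `|P| − |P₂|` and
its maximum vertex degree equals `M`; in particular, if `M ∈ [D, 2D]` then
`dD v h ≤ |P| − |P₂|`. -/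
theorem prefix_keeps_max_degree {V : Type*} [Fintype V]
    (G : SimpleGraph V) [DecidableRel G.Adj] (D : ℕ) (hD : 1 ≤ D)
    (R : Set V) (hR : ∀ x ∈ R, G.degree x < D)
    (v r h : V) (P : G.Walk v r) (P₁ : G.Walk v h) (P₂ : G.Walk h r)
    (hsplit : P = P₁.append P₂)
    (hM : D ≤ walkMaxDeg G P)
    (hhR : h ∉ R)
    (htail : ∀ x ∈ P₂.support.tail, x ∈ R) :
    P₁.length = P.length - P₂.length ∧
    walkMaxDeg G P₁ = walkMaxDeg G P ∧
    (walkMaxDeg G P ≤ 2 * D → dD G D v h ≤ P.length - P₂.length) := by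
  have hlen : P₁.length = P.length - P₂.length := by
    rw [hsplit, SimpleGraph.Walk.length_append]; omega
  have hmax : walkMaxDeg G P₁ = walkMaxDeg G P := by
    subst hsplit
    unfold walkMaxDeg at hM ⊢
    rw [SimpleGraph.Walk.support_append, List.map_append] at hM ⊢
    refine foldr_max_append_aux D _ _ ?_ hM
    intro x hx
    obtain ⟨y, hy, rfl⟩ := List.mem_map.1 hx
    exact hR y (htail y hy)
  refine ⟨hlen, hmax, fun h2 => ?_⟩
  exact Nat.sInf_le ⟨P₁, hmax ▸ hM, hmax ▸ h2, hlen⟩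
end

section
/- Let G be a finite simple graph whose maximum degree is at most 2D, and let δ, D be integers with 1 ≤ δ ≤ D. Let P be a walk from u to v with max_{x ∈ support(P)} deg_G(x) ≥ D. Let w be a vertex on P with deg_G(w) ≥ δ such that every vertex strictly after the last occurrence of w on P has degree less than δ, let ℓ be the number of edges of P strictly after that occurrence of w, and let s be any neighbor of w in G. Then there is a walk from u to s of length |P| − ℓ + 1 whose maximum vertex degree lies in [D, 2D]; consequently d_D(u,s) ≤ |P| − ℓ + 1. -/
theorem wmd_foldr_le (l : List ℕ) (n : ℕ) : l.foldr max 0 ≤ n ↔ ∀ a ∈ l, a ≤ n := by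
  induction l with
  | nil => simp
  | cons a l ih => simp [ih]

theorem wmd_le_iff {V : Type*} [Fintype V] (G : SimpleGraph V) [DecidableRel G.Adj]
    {u v : V} (p : G.Walk u v) (n : ℕ) :
    walkMaxDeg G p ≤ n ↔ ∀ x ∈ p.support, G.degree x ≤ n := by
  simp [walkMaxDeg, wmd_foldr_le]

/-- In a graph of maximum degree at most `2D`, with `1 ≤ δ ≤ D`: let `P` be a walk
from `u` to `v` with maximum support degree at least `D`, split as `P = P₁ ++ P₂` at
the last occurrence of a vertex `w` with `deg w ≥ δ` such that every vertex strictly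
afterwards has degree `< δ`, and let `s` be a neighbor of `w`.  Then there is a walk
from `u` to `s` of length `|P| − |P₂| + 1` whose maximum vertex degree lies in
`[D, 2D]`; consequently `dD u s ≤ |P| − |P₂| + 1`. -/
theorem detour_to_hitting_vertex {V : Type*} [Fintype V]
    (G : SimpleGraph V) [DecidableRel G.Adj] (D δ : ℕ)
    (hδ1 : 1 ≤ δ) (hδD : δ ≤ D)
    (hmax : ∀ x : V, G.degree x ≤ 2 * D)
    (u v w s : V) (P : G.Walk u v) (P₁ : G.Walk u w) (P₂ : G.Walk w v)
    (hsplit : P = P₁.append P₂)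
    (hM : D ≤ walkMaxDeg G P)
    (hw : δ ≤ G.degree w)
    (htail : ∀ x ∈ P₂.support.tail, G.degree x < δ)
    (hs : G.Adj w s) :
    (∃ Q : G.Walk u s, Q.length = P.length - P₂.length + 1 ∧
      D ≤ walkMaxDeg G Q ∧ walkMaxDeg G Q ≤ 2 * D) ∧
    dD G D u s ≤ P.length - P₂.length + 1 := by
  have key : ∃ Q : G.Walk u s, Q.length = P.length - P₂.length + 1 ∧
      D ≤ walkMaxDeg G Q ∧ walkMaxDeg G Q ≤ 2 * D := by
    refine ⟨P₁.concat hs, ?_, ?_, ?_⟩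
    · simp [hsplit]
    · by_contra hlt
      have hQ := (wmd_le_iff G (P₁.concat hs) (D - 1)).1 (by omega)
      have hP : walkMaxDeg G P ≤ D - 1 := by
        rw [wmd_le_iff]
        intro x hx
        rw [hsplit, SimpleGraph.Walk.support_append, List.mem_append] at hx
        rcases hx with hx | hx
        · apply hQ
          rw [SimpleGraph.Walk.support_concat]
          simp [hx]
        · have := htail x hx
          omega
      omega
    · rw [wmd_le_iff]
      exact fun x _ => hmax x
  refine ⟨key, ?_⟩
  obtain ⟨Q, h1, h2, h3⟩ := key
  exact Nat.sInf_le ⟨Q, h2, h3, h1⟩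
end
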